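/- arXiv:1505.06651 — 2 statements merged into one kernel-verified Lean document; each statement's English description precedes it below -/
import Mathlib

section
/- The formula POSTKh is derivable in SKH: for all formulas φ, χ, ρ of L_Kh, ⊢ Kh(ρ, Kh(φ,χ) ∧ φ) → Kh(ρ, χ). -/
/-- Formulas of the language L_Kh. -/
inductive Formula (P : Type) : Type
  | top : Formula P
  | atom : P → Formula P
  | neg : Formula P → Formula P
  | and : Formula P → Formula P → Formula P
  | kh : Formula P → Formula P → Formula P

namespace Formula

/-- ⊥ abbreviates ¬⊤. -/
def bot {P : Type} : Formula P := neg top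

/-- φ → ψ abbreviates ¬(φ ∧ ¬ψ). -/
def imp {P : Type} (φ ψ : Formula P) : Formula P := neg (φ.and ψ.neg)

/-- φ ↔ ψ. -/
def iff_ {P : Type} (φ ψ : Formula P) : Formula P := (φ.imp ψ).and (ψ.imp φ)

/-- Uφ abbreviates Kh(¬φ, ⊥). -/
def U {P : Type} (φ : Formula P) : Formula P := kh (neg φ) bot

end Formula

/-- A model (ability map): a labelled transition system with a nonempty set
of states, transitions labelled by action symbols in `A`, and a valuation. -/
structure Model (P A : Type) where
  S : Type
  ne : Nonempty S
  R : A → S → S → Prop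
  V : S → Set P

namespace Model

/-- `runs M σ s t` means s →σ t. -/
def runs {P A : Type} (M : Model P A) : List A → M.S → M.S → Prop
  | [], s, t => s = t
  | a :: σ, s, t => ∃ u, M.R a s u ∧ M.runs σ u t

/-- σ = a₁…aₙ is strongly executable at s: for every k < n and every t
reached from s by the length-k prefix of σ, t has an a_{k+1}-successor. -/
def SE {P A : Type} (M : Model P A) (σ : List A) (s : M.S) : Prop :=
  ∀ (k : ℕ) (hk : k < σ.length) (t : M.S),
    M.runs (σ.take k) s t → ∃ u, M.R (σ.get ⟨k, hk⟩) t u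

end Model

/-- Truth of a formula at a state of a model. -/
def Sat {P A : Type} (M : Model P A) : Formula P → M.S → Prop
  | .top, _ => True
  | .atom p, s => p ∈ M.V s
  | .neg φ, s => ¬ Sat M φ s
  | .and φ ψ, s => Sat M φ s ∧ Sat M ψ s
  | .kh ψ φ, _ => ∃ σ : List A, ∀ s' : M.S, Sat M ψ s' →
      M.SE σ s' ∧ ∀ t : M.S, M.runs σ s' t → Sat M φ t

/-- Validity: truth at every state of every model (over a countable
nonempty set of action symbols). -/
def Valid {P : Type} (φ : Formula P) : Prop :=
  ∀ (A : Type) [Countable A] [Nonempty A] (M : Model P A) (s : M.S), Sat M φ s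

/-- Boolean evaluation of a formula, treating atoms and Kh-formulas as
propositional variables (used to define instances of propositional tautologies). -/
def evalB {P : Type} (v : Formula P → Bool) : Formula P → Bool
  | .top => true
  | .atom p => v (.atom p)
  | .neg φ => !(evalB v φ)
  | .and φ ψ => evalB v φ && evalB v ψ
  | .kh ψ φ => v (.kh ψ φ)

/-- Uniform substitution of formulas for proposition letters. -/
def subst {P : Type} (s : P → Formula P) : Formula P → Formula P
  | .top => .top
  | .atom p => s p
  | .neg φ => (subst s φ).neg
  | .and φ ψ => (subst s φ).and (subst s ψ)
  | .kh ψ φ => (subst s ψ).kh (subst s φ)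

/-- The proof system SKH. -/
inductive Derivable {P : Type} : Formula P → Prop
  /-- all instances of propositional tautologies -/
  | taut {φ : Formula P} : (∀ v : Formula P → Bool, evalB v φ = true) → Derivable φ
  /-- DISTU -/
  | distU (φ ψ : Formula P) : Derivable (((φ.U).and ((φ.imp ψ).U)).imp ψ.U)
  /-- COMPKh -/
  | compKh (φ ρ χ : Formula P) : Derivable (((φ.kh ρ).and (ρ.kh χ)).imp (φ.kh χ))
  /-- EMP -/
  | emp (φ χ : Formula P) : Derivable (((φ.imp χ).U).imp (φ.kh χ))
  /-- TU -/
  | tU (φ : Formula P) : Derivable ((φ.U).imp φ)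
  /-- 4KU -/
  | fourKU (φ χ : Formula P) : Derivable ((φ.kh χ).imp ((φ.kh χ).U))
  /-- 5KU -/
  | fiveKU (φ χ : Formula P) : Derivable (((φ.kh χ).neg).imp (((φ.kh χ).neg).U))
  /-- modus ponens -/
  | mp {φ ψ : Formula P} : Derivable (φ.imp ψ) → Derivable φ → Derivable ψ
  /-- NECU -/
  | necU {φ : Formula P} : Derivable φ → Derivable φ.U
  /-- SUB: uniform substitution -/
  | sub {φ : Formula P} (s : P → Formula P) : Derivable φ → Derivable (subst s φ)

/-- A set of formulas is SKH-consistent if no finite conjunction of its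
members proves ⊥ in SKH. -/
def Consistent {P : Type} (Γ : Set (Formula P)) : Prop :=
  ¬ ∃ l : List (Formula P), (∀ φ ∈ l, φ ∈ Γ) ∧
      Derivable ((l.foldr Formula.and Formula.top).imp Formula.bot)

/-- Maximal consistent set. -/
def MCS {P : Type} (Γ : Set (Formula P)) : Prop :=
  Consistent Γ ∧ ∀ Δ : Set (Formula P), Consistent Δ → Γ ⊆ Δ → Δ = Γ

/-- Δ|_Kh : the Kh-formulas in Δ. -/
def khPart {P : Type} (Δ : Set (Formula P)) : Set (Formula P) :=
  {χ | χ ∈ Δ ∧ ∃ ψ φ : Formula P, χ = ψ.kh φ}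

/-- The states S^c_Γ of the canonical model for Γ. -/
def canonStates {P : Type} (Γ : Set (Formula P)) : Set (Set (Formula P)) :=
  {Δ | MCS Δ ∧ khPart Δ = khPart Γ}

/-- The action symbols Σ_Γ of the canonical model: pairs ⟨ψ,φ⟩ with Kh(ψ,φ) ∈ Γ. -/
def SigmaGamma {P : Type} (Γ : Set (Formula P)) : Type :=
  {pr : Formula P × Formula P // (pr.1.kh pr.2) ∈ Γ}

/-- The canonical model M^c_Γ for a maximal consistent set Γ. -/
def canonicalModel {P : Type} (Γ : Set (Formula P)) (hΓ : MCS Γ) :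
    Model P (SigmaGamma Γ) where
  S := {Δ : Set (Formula P) // Δ ∈ canonStates Γ}
  ne := ⟨⟨Γ, hΓ, rfl⟩⟩
  R := fun a Δ Θ => a.val.1 ∈ Δ.val ∧ a.val.2 ∈ Θ.val
  V := fun Δ => {p | Formula.atom p ∈ Δ.val}

/-!
The formula `Kh(Kh(φ,χ) ∧ φ, χ)` is itself derivable, by cases on `Kh(φ,χ)`. If `Kh(φ,χ)` holds,
compose it with `Kh(Kh(φ,χ) ∧ φ, φ)`, a case of EMP. If it fails, 5KU makes it fail
everywhere, so the precondition `Kh(φ,χ) ∧ φ` holds nowhere and EMP applies again. POSTKh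
follows by COMPKh.
-/

theorem evalB_neg {P : Type} (v : Formula P → Bool) (φ : Formula P) :
    evalB v φ.neg = true ↔ ¬ evalB v φ = true := by
  simp [evalB]

theorem evalB_and {P : Type} (v : Formula P → Bool) (φ ψ : Formula P) :
    evalB v (φ.and ψ) = true ↔ evalB v φ = true ∧ evalB v ψ = true := by
  simp [evalB]

theorem evalB_imp {P : Type} (v : Formula P → Bool) (φ ψ : Formula P) :
    evalB v (φ.imp ψ) = true ↔ (evalB v φ = true → evalB v ψ = true) := by
  rw [Formula.imp, evalB_neg, evalB_and, evalB_neg, not_and_not_right]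

namespace Derivable

variable {P : Type} {φ ψ χ ρ : Formula P}

theorem imp_of_evalB (h : ∀ v, evalB v φ = true → evalB v ψ = true) : Derivable (φ.imp ψ) :=
  taut fun v => (evalB_imp v φ ψ).mpr (h v)

theorem of_evalB₂ (h : ∀ v, evalB v φ = true → evalB v ψ = true → evalB v χ = true)
    (hφ : Derivable φ) (hψ : Derivable ψ) : Derivable χ :=
  mp (mp (imp_of_evalB fun v hv => (evalB_imp v ψ χ).mpr (h v hv)) hφ) hψ

theorem imp_trans (h₁ : Derivable (φ.imp ψ)) (h₂ : Derivable (ψ.imp χ)) :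
    Derivable (φ.imp χ) :=
  of_evalB₂ (fun v => by simp only [evalB_imp]; exact fun h₁ h₂ => h₂ ∘ h₁) h₁ h₂

theorem imp_of_and_imp_left (h : Derivable ((φ.and ψ).imp χ)) (hφ : Derivable φ) :
    Derivable (ψ.imp χ) :=
  of_evalB₂ (fun v => by
    simp only [evalB_imp, evalB_and]
    exact fun h hφ hψ => h ⟨hφ, hψ⟩) h hφ

theorem imp_of_and_imp_right (h : Derivable ((φ.and ψ).imp χ)) (hψ : Derivable ψ) :
    Derivable (φ.imp χ) :=
  of_evalB₂ (fun v => by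
    simp only [evalB_imp, evalB_and]
    exact fun h hψ hφ => h ⟨hφ, hψ⟩) h hψ

theorem of_imp_of_neg_imp (h : Derivable (φ.imp ψ)) (h_neg : Derivable (φ.neg.imp ψ)) :
    Derivable ψ :=
  of_evalB₂ (fun v => by
    simp only [evalB_imp, evalB_neg]
    exact fun h h_neg => (em _).elim h h_neg) h h_neg

theorem and_imp_right (φ ψ : Formula P) : Derivable ((φ.and ψ).imp ψ) :=
  imp_of_evalB fun v h => ((evalB_and v φ ψ).mp h).right

theorem neg_imp_and_imp (φ ψ χ : Formula P) : Derivable (φ.neg.imp ((φ.and ψ).imp χ)) :=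
  imp_of_evalB fun v => by
    simp only [evalB_imp, evalB_and, evalB_neg]
    exact fun h_neg h => absurd h.1 h_neg

theorem u_mono (h : Derivable (φ.imp ψ)) : Derivable (φ.U.imp ψ.U) :=
  imp_of_and_imp_right (distU φ ψ) (necU h)

theorem kh_of_imp (h : Derivable (φ.imp χ)) : Derivable (φ.kh χ) :=
  mp (emp φ χ) (necU h)

theorem kh_precomp (h : Derivable (φ.kh ρ)) (χ : Formula P) :
    Derivable ((ρ.kh χ).imp (φ.kh χ)) :=
  imp_of_and_imp_left (compKh φ ρ χ) h

theorem kh_postcomp (h : Derivable (ρ.kh χ)) (φ : Formula P) :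
    Derivable ((φ.kh ρ).imp (φ.kh χ)) :=
  imp_of_and_imp_right (compKh φ ρ χ) h

theorem u_neg_imp_kh_and (φ ψ χ : Formula P) : Derivable (φ.neg.U.imp ((φ.and ψ).kh χ)) :=
  imp_trans (u_mono (neg_imp_and_imp φ ψ χ)) (emp (φ.and ψ) χ)

theorem kh_kh_and_self (φ χ : Formula P) : Derivable (((φ.kh χ).and φ).kh χ) :=
  have of_kh : Derivable ((φ.kh χ).imp (((φ.kh χ).and φ).kh χ)) :=
    kh_precomp (kh_of_imp (and_imp_right (φ.kh χ) φ)) χ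
  have of_neg_kh : Derivable ((φ.kh χ).neg.imp (((φ.kh χ).and φ).kh χ)) :=
    imp_trans (fiveKU φ χ) (u_neg_imp_kh_and (φ.kh χ) φ χ)
  of_imp_of_neg_imp of_kh of_neg_kh

end Derivable

/-- POSTKh is derivable in SKH:
⊢ Kh(ρ, Kh(φ,χ) ∧ φ) → Kh(ρ, χ). -/
theorem postkh_derivable {P : Type} (φ χ ρ : Formula P) :
    Derivable ((ρ.kh ((φ.kh χ).and φ)).imp (ρ.kh χ)) :=
  Derivable.kh_postcomp (Derivable.kh_kh_and_self φ χ) ρ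
end

section
/- SKH is strongly complete with respect to the class of all models: every SKH-consistent set of L_Kh formulas is satisfiable, i.e., for every SKH-consistent set Γ₀ there exist a model M and a state s of M such that M,s ⊨ φ for all φ ∈ Γ₀. -/
/-!
Extend the given set to a maximal consistent set `Γ`. By `4KU` and `5KU`, every maximal consistent
set containing all `θ` with `Uθ ∈ Γ` has the same Kh-formulas as `Γ`, so `U` expresses truth at
every state of the canonical model. If `Kh(ψ, φ) ∈ Γ`, the one-letter plan `⟨ψ, φ⟩` witnesses it:
if no state contained `φ`, then `Kh(φ, ⊥) ∈ Γ`, so `COMPKh` would give `Kh(ψ, ⊥) ∈ Γ` and no state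
would contain `ψ`. Conversely, every plan is a chain of actions `⟨ψᵢ, φᵢ⟩` with `Kh(ψᵢ, φᵢ) ∈ Γ`;
strong executability puts the set of states before each step inside the one for `ψᵢ`, and the set
after it, if nonempty, is exactly the one for `φᵢ`, so `EMP` and `COMPKh` collapse the chain to a
single Kh-formula of `Γ`.
-/

variable {P : Type}

section Countability

namespace Formula

/-- Gödel numbering of formulas, relative to a numbering `f` of the proposition letters. The first
component of each pair is a tag for the outermost constructor. -/
def godelNumber (f : P → ℕ) : Formula P → ℕ
  | top => Nat.pair 0 0
  | atom p => Nat.pair 1 (f p)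
  | neg φ => Nat.pair 2 (φ.godelNumber f)
  | and φ ψ => Nat.pair 3 (Nat.pair (φ.godelNumber f) (ψ.godelNumber f))
  | kh ψ φ => Nat.pair 4 (Nat.pair (ψ.godelNumber f) (φ.godelNumber f))

theorem godelNumber_injective {f : P → ℕ} (hf : f.Injective) :
    (godelNumber f).Injective := by
  intro φ
  induction φ <;> rintro (_ | _) h <;> grind [godelNumber, Nat.pair_eq_pair, Function.Injective]

instance [Countable P] : Countable (Formula P) :=
  let ⟨_, hf⟩ := exists_injective_nat P
  (godelNumber_injective hf).countable

end Formula

instance [Countable P] (Γ : Set (Formula P)) : Countable (SigmaGamma Γ) :=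
  inferInstanceAs (Countable {pr : Formula P × Formula P // pr.1.kh pr.2 ∈ Γ})

end Countability

section Provability

variable {Γ : Set (Formula P)} {φ ψ : Formula P}

theorem evalB_bot (v : Formula P → Bool) : evalB v Formula.bot = false := rfl

theorem evalB_imp_eq_true_iff (v : Formula P → Bool) (φ ψ : Formula P) :
    evalB v (φ.imp ψ) = true ↔ (evalB v φ = true → evalB v ψ = true) := by
  cases h : evalB v φ <;> simp [Formula.imp, evalB, h]

theorem evalB_foldr_and_eq_true_iff (v : Formula P → Bool) (l : List (Formula P)) :
    evalB v (l.foldr Formula.and Formula.top) = true ↔ ∀ χ ∈ l, evalB v χ = true := by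
  induction l with
  | nil => simp [evalB]
  | cons χ l ih => simp [evalB, ih]

theorem Derivable.of_evalB_imp (hφ : Derivable φ)
    (h : ∀ v, evalB v φ = true → evalB v ψ = true) : Derivable ψ :=
  .mp (.taut fun v => (evalB_imp_eq_true_iff v φ ψ).2 (h v)) hφ

/-- `Provable Γ φ` is `Γ ⊢ φ`: some finite conjunction of members of `Γ` implies `φ` in SKH. The
conjunction is encoded as in `Consistent`. -/
def Provable (Γ : Set (Formula P)) (φ : Formula P) : Prop :=
  ∃ l : List (Formula P), (∀ χ ∈ l, χ ∈ Γ) ∧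
    Derivable ((l.foldr Formula.and Formula.top).imp φ)

theorem consistent_iff_not_provable_bot : Consistent Γ ↔ ¬ Provable Γ Formula.bot := Iff.rfl

theorem Derivable.provable (h : Derivable φ) : Provable Γ φ :=
  ⟨[], by simp, h.of_evalB_imp fun v hv => (evalB_imp_eq_true_iff v _ _).2 fun _ => hv⟩

theorem Provable.of_mem (h : φ ∈ Γ) : Provable Γ φ :=
  ⟨[φ], by simpa using h, .taut fun v => by simp [evalB, evalB_imp_eq_true_iff]⟩

theorem Provable.mp (hφψ : Provable Γ (φ.imp ψ)) (hφ : Provable Γ φ) : Provable Γ ψ := by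
  obtain ⟨l₁, hl₁, hd₁⟩ := hφψ
  obtain ⟨l₂, hl₂, hd₂⟩ := hφ
  refine ⟨l₁ ++ l₂, ?_, .mp (.mp (.taut fun v => ?_) hd₁) hd₂⟩
  · simpa only [List.forall_mem_append] using ⟨hl₁, hl₂⟩
  · simp only [evalB_imp_eq_true_iff, evalB_foldr_and_eq_true_iff, List.forall_mem_append]
    tauto

theorem Provable.of_evalB_imp (hφ : Provable Γ φ)
    (h : ∀ v, evalB v φ = true → evalB v ψ = true) : Provable Γ ψ :=
  .mp (Derivable.provable (.taut fun v => (evalB_imp_eq_true_iff v φ ψ).2 (h v))) hφ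

theorem Provable.imp_of_insert (h : Provable (insert φ Γ) ψ) : Provable Γ (φ.imp ψ) := by
  classical
  obtain ⟨l, hl, hd⟩ := h
  refine ⟨l.filter (· ≠ φ), fun χ hχ => ?_, hd.of_evalB_imp fun v hv => ?_⟩
  · obtain ⟨hχl, hχφ⟩ : χ ∈ l ∧ χ ≠ φ := by simpa using hχ
    exact (hl χ hχl).resolve_left hχφ
  · simp only [evalB_imp_eq_true_iff, evalB_foldr_and_eq_true_iff, List.mem_filter,
      decide_eq_true_eq] at hv ⊢
    intro hfilter hφ
    refine hv fun χ hχ => ?_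
    by_cases hχφ : χ = φ
    · rwa [hχφ]
    · exact hfilter χ ⟨hχ, hχφ⟩

theorem consistent_insert_neg (h : ¬ Provable Γ φ) : Consistent (insert φ.neg Γ) := by
  refine consistent_iff_not_provable_bot.2 fun hbot => h ?_
  exact hbot.imp_of_insert.of_evalB_imp fun v => by
    simp [evalB_imp_eq_true_iff, evalB, evalB_bot]

end Provability

section MaximalConsistentSets

namespace MCS

variable {Γ : Set (Formula P)} {φ ψ : Formula P}

theorem not_provable_bot (hΓ : MCS Γ) : ¬ Provable Γ Formula.bot :=
  consistent_iff_not_provable_bot.1 hΓ.1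

theorem mem_of_consistent_insert (hΓ : MCS Γ) (h : Consistent (insert φ Γ)) : φ ∈ Γ :=
  hΓ.2 _ h (Set.subset_insert φ Γ) ▸ Set.mem_insert φ Γ

theorem mem_of_provable (hΓ : MCS Γ) (h : Provable Γ φ) : φ ∈ Γ :=
  hΓ.mem_of_consistent_insert <| consistent_iff_not_provable_bot.2 fun hbot =>
    hΓ.not_provable_bot (hbot.imp_of_insert.mp h)

theorem mem_of_derivable (hΓ : MCS Γ) (h : Derivable φ) : φ ∈ Γ :=
  hΓ.mem_of_provable h.provable

theorem mem_of_derivable_imp (hΓ : MCS Γ) (h : Derivable (φ.imp ψ)) (hφ : φ ∈ Γ) : ψ ∈ Γ :=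
  hΓ.mem_of_provable (h.provable.mp (.of_mem hφ))

theorem and_mem_iff (hΓ : MCS Γ) : φ.and ψ ∈ Γ ↔ φ ∈ Γ ∧ ψ ∈ Γ := by
  refine ⟨fun h => ⟨?_, ?_⟩, fun ⟨hφ, hψ⟩ => ?_⟩
  · have hleft : Derivable ((φ.and ψ).imp φ) :=
      .taut fun v => by simp +contextual [evalB_imp_eq_true_iff, evalB]
    exact hΓ.mem_of_derivable_imp hleft h
  · have hright : Derivable ((φ.and ψ).imp ψ) :=
      .taut fun v => by simp [evalB_imp_eq_true_iff, evalB]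
    exact hΓ.mem_of_derivable_imp hright h
  · have hpair : Derivable (φ.imp (ψ.imp (φ.and ψ))) :=
      .taut fun v => by simp +contextual [evalB_imp_eq_true_iff, evalB]
    exact hΓ.mem_of_provable ((hpair.provable.mp (.of_mem hφ)).mp (.of_mem hψ))

theorem neg_mem_iff (hΓ : MCS Γ) : φ.neg ∈ Γ ↔ φ ∉ Γ := by
  refine ⟨fun hneg hφ => ?_, fun hφ => ?_⟩
  · have hcontra : Provable Γ (φ.and φ.neg) := .of_mem (hΓ.and_mem_iff.2 ⟨hφ, hneg⟩)
    exact hΓ.not_provable_bot (hcontra.of_evalB_imp fun v => by simp [evalB])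
  · exact hΓ.mem_of_consistent_insert (consistent_insert_neg (mt hΓ.mem_of_provable hφ))

theorem imp_mem_iff (hΓ : MCS Γ) : φ.imp ψ ∈ Γ ↔ (φ ∈ Γ → ψ ∈ Γ) := by
  rw [Formula.imp, hΓ.neg_mem_iff, hΓ.and_mem_iff, hΓ.neg_mem_iff, not_and_not_right]

end MCS

theorem Consistent.sUnion {c : Set (Set (Formula P))} (hne : c.Nonempty)
    (hdir : DirectedOn (· ⊆ ·) c) (hc : ∀ Γ ∈ c, Consistent Γ) : Consistent (⋃₀ c) := by
  rintro ⟨l, hl, hd⟩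
  obtain ⟨Γ, hΓ, hlΓ⟩ := hdir.exists_mem_subset_of_finite_of_subset_sUnion hne l.finite_toSet hl
  exact hc Γ hΓ ⟨l, hlΓ, hd⟩

theorem Consistent.exists_mcs_superset {Γ : Set (Formula P)} (h : Consistent Γ) :
    ∃ Δ, Γ ⊆ Δ ∧ MCS Δ := by
  obtain ⟨Δ, hΓΔ, hΔ⟩ := zorn_subset_nonempty {Δ : Set (Formula P) | Consistent Δ}
    (fun c hc hchain hne =>
      ⟨⋃₀ c, .sUnion hne hchain.directedOn hc, fun _ => Set.subset_sUnion_of_mem⟩) Γ h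
  exact ⟨Δ, hΓΔ, hΔ.prop, fun Θ hΘ hΔΘ => (hΔ.eq_of_subset hΘ hΔΘ).symm⟩

theorem provable_of_forall_mcs {Γ : Set (Formula P)} {φ : Formula P}
    (h : ∀ Δ, MCS Δ → Γ ⊆ Δ → φ ∈ Δ) : Provable Γ φ := by
  by_contra hφ
  obtain ⟨Δ, hΓΔ, hΔ⟩ := (consistent_insert_neg hφ).exists_mcs_superset
  obtain ⟨hneg, hsub⟩ := Set.insert_subset_iff.1 hΓΔ
  exact hΔ.neg_mem_iff.1 hneg (h Δ hΔ hsub)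

end MaximalConsistentSets

section UniversalModality

variable {Γ Δ : Set (Formula P)} {φ ψ : Formula P}

/-- The set of all `θ` with `Uθ ∈ Γ`: what a maximal consistent set `Γ` requires of every state of
its canonical model. -/
def unbox (Γ : Set (Formula P)) : Set (Formula P) := {θ | θ.U ∈ Γ}

theorem kh_mem_iff_of_mem_canonStates (hΔ : Δ ∈ canonStates Γ) : ψ.kh φ ∈ Δ ↔ ψ.kh φ ∈ Γ := by
  simpa [khPart] using Set.ext_iff.1 hΔ.2 (ψ.kh φ)

theorem MCS.U_mem_of_derivable (hΓ : MCS Γ) (h : Derivable φ) : φ.U ∈ Γ :=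
  hΓ.mem_of_derivable (.necU h)

theorem MCS.U_mem_of_U_imp_mem (hΓ : MCS Γ) (hφψ : (φ.imp ψ).U ∈ Γ) (hφ : φ.U ∈ Γ) : ψ.U ∈ Γ :=
  hΓ.mem_of_derivable_imp (.distU φ ψ) (hΓ.and_mem_iff.2 ⟨hφ, hφψ⟩)

theorem MCS.U_mem_of_provable_unbox (hΓ : MCS Γ) (h : Provable (unbox Γ) φ) : φ.U ∈ Γ := by
  obtain ⟨l, hl, hd⟩ := h
  induction l generalizing φ with
  | nil =>
    exact hΓ.U_mem_of_derivable (hd.of_evalB_imp fun v => by simp [evalB_imp_eq_true_iff, evalB])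
  | cons χ l ih =>
    obtain ⟨hχ, hl⟩ := List.forall_mem_cons.1 hl
    have hcurry : Derivable ((l.foldr Formula.and Formula.top).imp (χ.imp φ)) :=
      hd.of_evalB_imp fun v => by
        simp only [List.foldr_cons, evalB_imp_eq_true_iff, evalB, Bool.and_eq_true]
        tauto
    exact hΓ.U_mem_of_U_imp_mem (ih hl hcurry) hχ

theorem MCS.mem_canonStates_of_unbox_subset (hΓ : MCS Γ) (hΔ : MCS Δ) (h : unbox Γ ⊆ Δ) :
    Δ ∈ canonStates Γ := by
  have hkh (ψ φ : Formula P) : ψ.kh φ ∈ Δ ↔ ψ.kh φ ∈ Γ := by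
    refine ⟨fun hkhΔ => ?_, fun hkhΓ => h (hΓ.mem_of_derivable_imp (.fourKU ψ φ) hkhΓ)⟩
    by_contra hkhΓ
    have hneg : (ψ.kh φ).neg ∈ Δ :=
      h (hΓ.mem_of_derivable_imp (.fiveKU ψ φ) (hΓ.neg_mem_iff.2 hkhΓ))
    exact hΔ.neg_mem_iff.1 hneg hkhΔ
  refine ⟨hΔ, Set.ext fun θ => and_congr_left ?_⟩
  rintro ⟨ψ, φ, rfl⟩
  exact hkh ψ φ

theorem MCS.U_mem_iff (hΓ : MCS Γ) : φ.U ∈ Γ ↔ ∀ Δ ∈ canonStates Γ, φ ∈ Δ := by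
  refine ⟨fun h Δ hΔ => ?_, fun h => ?_⟩
  · exact hΔ.1.mem_of_derivable_imp (.tU φ) ((kh_mem_iff_of_mem_canonStates hΔ).2 h)
  · exact hΓ.U_mem_of_provable_unbox <| provable_of_forall_mcs fun Δ hΔ hsub =>
      h Δ (hΓ.mem_canonStates_of_unbox_subset hΔ hsub)

end UniversalModality

section KnowingHow

namespace MCS

variable {Γ Δ : Set (Formula P)} {φ ψ χ : Formula P}

theorem kh_mem_of_forall_canonStates (hΓ : MCS Γ) (h : ∀ Δ ∈ canonStates Γ, ψ ∈ Δ → φ ∈ Δ) :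
    ψ.kh φ ∈ Γ :=
  hΓ.mem_of_derivable_imp (.emp ψ φ) (hΓ.U_mem_iff.2 fun Δ hΔ => hΔ.1.imp_mem_iff.2 (h Δ hΔ))

theorem kh_mem_trans (hΓ : MCS Γ) (hψχ : ψ.kh χ ∈ Γ) (hχφ : χ.kh φ ∈ Γ) : ψ.kh φ ∈ Γ :=
  hΓ.mem_of_derivable_imp (.compKh ψ χ φ) (hΓ.and_mem_iff.2 ⟨hψχ, hχφ⟩)

theorem kh_bot_mem_iff (hΓ : MCS Γ) :
    φ.kh Formula.bot ∈ Γ ↔ ∀ Δ ∈ canonStates Γ, φ ∉ Δ := by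
  refine ⟨fun h Δ hΔ => ?_, fun h => ?_⟩
  · have hdneg : φ.neg.neg.kh φ ∈ Γ := hΓ.kh_mem_of_forall_canonStates fun Θ hΘ => by
      rw [hΘ.1.neg_mem_iff, hΘ.1.neg_mem_iff, not_not]
      exact id
    have hU : φ.neg.U ∈ Γ := hΓ.kh_mem_trans hdneg h
    exact hΔ.1.neg_mem_iff.1 (hΓ.U_mem_iff.1 hU Δ hΔ)
  · exact hΓ.kh_mem_of_forall_canonStates fun Δ hΔ hφ => absurd hφ (h Δ hΔ)

theorem exists_mem_canonStates_of_kh_mem (hΓ : MCS Γ) (hkh : ψ.kh φ ∈ Γ)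
    (hΔ : Δ ∈ canonStates Γ) (hψ : ψ ∈ Δ) : ∃ Θ ∈ canonStates Γ, φ ∈ Θ := by
  by_contra! h
  exact hΓ.kh_bot_mem_iff.1 (hΓ.kh_mem_trans hkh (hΓ.kh_bot_mem_iff.2 h)) Δ hΔ hψ

theorem nonempty_sigmaGamma (hΓ : MCS Γ) : Nonempty (SigmaGamma Γ) :=
  ⟨⟨(.top, .top), hΓ.kh_mem_of_forall_canonStates fun _ _ => id⟩⟩

end MCS

end KnowingHow

section Plans

namespace Model

variable {A : Type} (M : Model P A) {a : A} {σ : List A} {s : M.S} {X Y : Set M.S}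

theorem SE_nil (s : M.S) : M.SE [] s := fun _ hk => absurd hk (Nat.not_lt_zero _)

theorem SE_cons_iff : M.SE (a :: σ) s ↔ (∃ u, M.R a s u) ∧ ∀ u, M.R a s u → M.SE σ u := by
  constructor
  · exact fun h => ⟨h 0 (Nat.succ_pos _) s rfl,
      fun u hu k hk t ht => h (k + 1) (Nat.succ_lt_succ hk) t ⟨u, hu, ht⟩⟩
  · rintro ⟨hstep, htail⟩ (_ | k) hk t ht
    · obtain rfl : s = t := ht
      exact hstep
    · obtain ⟨u, hu, ht⟩ := ht
      exact htail u hu k (Nat.lt_of_succ_lt_succ hk) t ht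

/-- `M.IsPlan σ X Y`: the plan `σ` is strongly executable at every state of `X`, and every run of
`σ` from `X` ends in `Y`. This is the condition on `σ` in the truth clause of `Kh`. -/
def IsPlan (σ : List A) (X Y : Set M.S) : Prop :=
  ∀ s ∈ X, M.SE σ s ∧ ∀ t, M.runs σ s t → t ∈ Y

theorem isPlan_nil_iff : M.IsPlan [] X Y ↔ X ⊆ Y := by
  simp [IsPlan, SE_nil, runs, Set.subset_def]

theorem isPlan_cons_iff : M.IsPlan (a :: σ) X Y ↔
    (∀ s ∈ X, ∃ u, M.R a s u) ∧ M.IsPlan σ {u | ∃ s ∈ X, M.R a s u} Y := by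
  simp only [IsPlan, SE_cons_iff, runs, Set.mem_ofPred_eq]
  grind

end Model

theorem sat_kh_iff {A : Type} (M : Model P A) (ψ φ : Formula P) (s : M.S) :
    Sat M (ψ.kh φ) s ↔ ∃ σ, M.IsPlan σ {t | Sat M ψ t} {t | Sat M φ t} := Iff.rfl

end Plans

section CanonicalModel

variable {Γ : Set (Formula P)} (hΓ : MCS Γ) {φ ψ : Formula P}

theorem isPlan_singleton_canonicalModel (a : SigmaGamma Γ) :
    (canonicalModel Γ hΓ).IsPlan [a] {s | a.val.1 ∈ s.val} {s | a.val.2 ∈ s.val} := by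
  rw [Model.isPlan_cons_iff, Model.isPlan_nil_iff]
  constructor
  · intro s hpre
    obtain ⟨Θ, hΘ, hpost⟩ := hΓ.exists_mem_canonStates_of_kh_mem a.property s.property hpre
    exact ⟨⟨Θ, hΘ⟩, hpre, hpost⟩
  · rintro u ⟨s, -, -, hpost⟩
    exact hpost

theorem kh_mem_of_isPlan_canonicalModel (σ : List (SigmaGamma Γ))
    (h : (canonicalModel Γ hΓ).IsPlan σ {s | ψ ∈ s.val} {s | φ ∈ s.val}) : ψ.kh φ ∈ Γ := by
  induction σ generalizing ψ with
  | nil =>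
    rw [Model.isPlan_nil_iff] at h
    exact hΓ.kh_mem_of_forall_canonStates fun Δ hΔ hψ => @h ⟨Δ, hΔ⟩ hψ
  | cons a σ ih =>
    obtain ⟨hexec, hplan⟩ := (Model.isPlan_cons_iff _).1 h
    have hpre : ∀ Δ ∈ canonStates Γ, ψ ∈ Δ → a.val.1 ∈ Δ := fun Δ hΔ hψ =>
      let ⟨_, hpre, _⟩ := hexec ⟨Δ, hΔ⟩ hψ
      hpre
    by_cases hψ : ∃ Δ ∈ canonStates Γ, ψ ∈ Δ
    · obtain ⟨Δ, hΔ, hψ⟩ := hψ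
      have hpost : a.val.2.kh φ ∈ Γ :=
        ih fun u hu => hplan u ⟨⟨Δ, hΔ⟩, hψ, hpre Δ hΔ hψ, hu⟩
      exact hΓ.kh_mem_trans (hΓ.kh_mem_of_forall_canonStates hpre)
        (hΓ.kh_mem_trans a.property hpost)
    · exact hΓ.kh_mem_of_forall_canonStates fun Δ hΔ hψΔ => absurd ⟨Δ, hΔ, hψΔ⟩ hψ

theorem kh_mem_iff_exists_isPlan_canonicalModel : ψ.kh φ ∈ Γ ↔
    ∃ σ, (canonicalModel Γ hΓ).IsPlan σ {s | ψ ∈ s.val} {s | φ ∈ s.val} :=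
  ⟨fun hkh => ⟨_, isPlan_singleton_canonicalModel hΓ ⟨(ψ, φ), hkh⟩⟩,
    fun ⟨σ, hσ⟩ => kh_mem_of_isPlan_canonicalModel hΓ σ hσ⟩

theorem sat_canonicalModel_iff (s : (canonicalModel Γ hΓ).S) :
    Sat (canonicalModel Γ hΓ) φ s ↔ φ ∈ s.val := by
  induction φ generalizing s with
  | top => exact iff_of_true trivial (s.property.1.mem_of_derivable (.taut fun _ => rfl))
  | atom p => exact Iff.rfl
  | neg φ ih => rw [s.property.1.neg_mem_iff, ← ih s, Sat]
  | and φ ψ ihφ ihψ => rw [s.property.1.and_mem_iff, ← ihφ s, ← ihψ s, Sat]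
  | kh ψ φ ihψ ihφ =>
    rw [kh_mem_iff_of_mem_canonStates s.property, kh_mem_iff_exists_isPlan_canonicalModel hΓ,
      sat_kh_iff]
    simp only [ihψ, ihφ]

end CanonicalModel

/-- SKH is strongly complete w.r.t. the class of all models:
every SKH-consistent set of formulas is satisfiable in some model (over a
countable nonempty set of action symbols) at some state. -/
theorem skh_strongly_complete {P : Type} [Countable P]
    (Γ₀ : Set (Formula P)) (h : Consistent Γ₀) :
    ∃ (A : Type) (_ : Countable A) (_ : Nonempty A) (M : Model P A) (s : M.S),
      ∀ φ ∈ Γ₀, Sat M φ s := by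
  obtain ⟨Γ, hΓ₀Γ, hΓ⟩ := h.exists_mcs_superset
  exact ⟨SigmaGamma Γ, inferInstance, hΓ.nonempty_sigmaGamma, canonicalModel Γ hΓ, ⟨Γ, hΓ, rfl⟩,
    fun φ hφ => (sat_canonicalModel_iff hΓ _).2 (hΓ₀Γ hφ)⟩
end
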